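/- Let P ∈ ℂ[X₁,…,Xₙ] be a homogeneous polynomial of degree d, q ∈ ℕ, b ∈ 𝒮((ℤⁿ)^q), (ε_i)_{1≤i≤q} ∈ {−1,0,1}^q, and let Θ ∈ M_n(ℝ) be a diophantine matrix. Set 𝒵 := { l ∈ (ℤⁿ)^q : Σ_{i=1}^q ε_i l_i = 0 }. Then the function g₀(s) := Σ_{l∈(ℤⁿ)^q ∖ 𝒵} b(l) · f_{Θ Σ_{i=1}^q ε_i l_i}(s), where f_a(s) := Σ'_{k∈ℤⁿ} (P(k)/|k|^s) e^{2πi k·a}, extends holomorphically to the whole complex plane ℂ. -/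

import Mathlib

open Filter Topology

noncomputable section

/-- Euclidean norm of an integer vector `k ∈ ℤⁿ`. -/
def znorm {n : ℕ} (k : Fin n → ℤ) : ℝ := Real.sqrt (∑ i, ((k i : ℝ)) ^ 2)

/-- Schwartz (rapidly decreasing) sequences on `(ℤⁿ)^q`. -/
def IsSchwartzSeq {q n : ℕ} (b : (Fin q → Fin n → ℤ) → ℂ) : Prop :=
  ∀ r : ℕ, ∃ C : ℝ, ∀ l : Fin q → Fin n → ℤ,
    (1 + ∑ i, ∑ a, ((l i a : ℝ)) ^ 2) ^ r * ‖b l‖ ^ 2 ≤ C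

/-- A vector `a ∈ ℝⁿ` is diophantine: for some `δ, c > 0`,
`|q·a − m| ≥ c |q|^{−δ}` for all `q ∈ ℤⁿ ∖ {0}` and all `m ∈ ℤ`. -/
def IsDiophantineVector {n : ℕ} (a : Fin n → ℝ) : Prop :=
  ∃ δ : ℝ, 0 < δ ∧ ∃ c : ℝ, 0 < c ∧ ∀ q : Fin n → ℤ, q ≠ 0 → ∀ m : ℤ,
    c * znorm q ^ (-δ) ≤ |(∑ i, (q i : ℝ) * a i) - (m : ℝ)|

/-- A matrix `Θ ∈ Mₙ(ℝ)` is diophantine if `ᵗΘ(u)` is a diophantine vector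
for some `u ∈ ℤⁿ`. -/
def IsDiophantineMatrix {n : ℕ} (Θ : Matrix (Fin n) (Fin n) ℝ) : Prop :=
  ∃ u : Fin n → ℤ, IsDiophantineVector (Θ.transpose.mulVec fun i => (u i : ℝ))

/-- Term of the twisted series `f_a(s) = Σ'_{k∈ℤⁿ} (P(k)/|k|^s) e^{2πi k·a}`. -/
def fTerm {n : ℕ} (P : MvPolynomial (Fin n) ℂ) (a : Fin n → ℝ) (s : ℂ) (k : Fin n → ℤ) : ℂ :=
  if k = 0 then 0 else
    MvPolynomial.eval (fun i => ((k i : ℤ) : ℂ)) P / ((znorm k : ℂ) ^ s) *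
      Complex.exp (2 * (Real.pi : ℂ) * Complex.I * ((∑ i, (k i : ℝ) * a i : ℝ) : ℂ))

lemma fwdDiff_iter_bound (ρ : ℝ) (hρ : 0 < ρ) (N : ℕ) : ∀ (g : ℂ → ℂ) (R M : ℝ),
    DifferentiableOn ℂ g (Metric.ball 0 R) → (∀ z ∈ Metric.ball (0:ℂ) R, ‖g z‖ ≤ M) →
    ∀ z ∈ Metric.ball (0:ℂ) (R - N * (1 + ρ)), ‖(fwdDiff (1:ℂ))^[N] g z‖ ≤ M / ρ ^ N := by
  induction N with
  | zero => intro g R M hg hM z hz; simpa using hM z (by simpa using hz)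
  | succ N ih =>
    intro g R M hg hM z hz
    have hder : ∀ w ∈ Metric.ball (0:ℂ) (R - ρ), ‖deriv g w‖ ≤ M / ρ := by
      intro w hw
      have hsub : Metric.closedBall w ρ ⊆ Metric.ball 0 R := by
        apply Metric.closedBall_subset_ball'
        rw [Metric.mem_ball] at hw
        linarith
      apply Complex.norm_deriv_le_of_forall_mem_sphere_norm_le hρ
      · exact (hg.mono hsub).diffContOnCl_ball subset_rfl
      · intro x hx
        exact hM x (hsub (Metric.sphere_subset_closedBall hx))
    rw [Function.iterate_succ_apply, pow_succ', ← div_div]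
    have hin : ∀ w ∈ Metric.ball (0:ℂ) (R - (1 + ρ)),
        w ∈ Metric.ball (0:ℂ) (R - ρ) ∧ w + 1 ∈ Metric.ball (0:ℂ) (R - ρ) := by
      intro w hw
      rw [mem_ball_zero_iff] at hw
      rw [mem_ball_zero_iff, mem_ball_zero_iff]
      have := norm_add_le w 1
      rw [norm_one] at this
      constructor <;> linarith
    have hs : Metric.ball (0:ℂ) (R - ρ) ⊆ Metric.ball 0 R := Metric.ball_subset_ball (by linarith)
    refine ih (fwdDiff 1 g) (R - (1 + ρ)) (M / ρ) ?_ ?_ z ?_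
    · have h1 : DifferentiableOn ℂ g (Metric.ball 0 (R - (1 + ρ))) :=
        hg.mono fun w hw => hs (hin w hw).1
      have h2 : DifferentiableOn ℂ (fun w => g (w + 1)) (Metric.ball 0 (R - (1 + ρ))) :=
        hg.comp (by fun_prop) fun w hw => hs (hin w hw).2
      exact h2.sub h1
    · intro w hw
      have h := (convex_ball (0:ℂ) (R - ρ)).norm_image_sub_le_of_norm_deriv_le (f := g)
        (fun x hx => (hg.differentiableAt (Metric.isOpen_ball.mem_nhds (hs hx)))) hder
        (hin w hw).1 (hin w hw).2
      simpa [fwdDiff] using h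
    · convert hz using 2
      push_cast; ring

lemma summable_int_norm_rpow (ι : Type) [Fintype ι] (r : ℝ) (hr : r < -(Fintype.card ι : ℝ)) :
    Summable fun k : ι → ℤ => ‖k‖ ^ r := by
  classical
  let L : Submodule ℤ (ι → ℝ) := Submodule.span ℤ (Set.range (Pi.basisFun ℝ ι))
  have hrank : Module.finrank ℤ L = Fintype.card ι := by
    rw [ZLattice.rank ℝ L]; simp
  have hL := ZLattice.summable_norm_rpow L r (by rw [hrank]; exact hr)
  have hmem : ∀ k : ι → ℤ, (fun i => (k i : ℝ)) ∈ L := by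
    intro k
    rw [(Pi.basisFun ℝ ι).mem_span_iff_repr_mem ℤ]
    intro i
    exact ⟨k i, by simp⟩
  have hinj : Function.Injective (fun k : ι → ℤ => (⟨fun i => (k i : ℝ), hmem k⟩ : L)) := by
    intro k k' h
    funext i
    have : (k i : ℝ) = (k' i : ℝ) := congrFun (congrArg Subtype.val h) i
    exact_mod_cast this
  refine (hL.comp_injective hinj).congr fun k => ?_
  simp only [Function.comp]
  congr 1

lemma znorm_nonneg {n : ℕ} (k : Fin n → ℤ) : 0 ≤ znorm k := Real.sqrt_nonneg _

lemma znorm_sq {n : ℕ} (k : Fin n → ℤ) : znorm k ^ 2 = ∑ i, ((k i : ℝ)) ^ 2 :=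
  Real.sq_sqrt (by positivity)

lemma abs_le_znorm {n : ℕ} (k : Fin n → ℤ) (i : Fin n) : |(k i : ℝ)| ≤ znorm k := by
  apply Real.le_sqrt_of_sq_le
  rw [sq_abs]
  exact Finset.single_le_sum (f := fun i => ((k i : ℝ)) ^ 2) (fun _ _ => by positivity)
    (Finset.mem_univ i)

lemma norm_le_znorm {n : ℕ} (k : Fin n → ℤ) : ‖k‖ ≤ znorm k := by
  rw [pi_norm_le_iff_of_nonneg (znorm_nonneg k)]
  intro i
  rw [Int.norm_eq_abs]
  exact abs_le_znorm k i

lemma one_le_norm_int {ι : Type} [Fintype ι] {k : ι → ℤ} (hk : k ≠ 0) : 1 ≤ ‖k‖ := by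
  obtain ⟨i, hi⟩ := Function.ne_iff.mp hk
  refine le_trans ?_ (norm_le_pi_norm k i)
  rw [Int.norm_eq_abs]
  exact_mod_cast Int.one_le_abs hi

lemma one_le_znorm {n : ℕ} {k : Fin n → ℤ} (hk : k ≠ 0) : 1 ≤ znorm k :=
  (one_le_norm_int hk).trans (norm_le_znorm k)

lemma abs_inner_le {n : ℕ} (k u : Fin n → ℤ) :
    |∑ i, (k i : ℝ) * (u i : ℝ)| ≤ znorm k * znorm u := by
  have := Finset.sum_mul_sq_le_sq_mul_sq Finset.univ (fun i => (k i : ℝ)) (fun i => (u i : ℝ))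
  rw [← znorm_sq, ← znorm_sq, ← mul_pow] at this
  exact abs_le_of_sq_le_sq this (mul_nonneg (znorm_nonneg _) (znorm_nonneg _))

lemma finite_znorm_lt {n : ℕ} (A : ℝ) : {k : Fin n → ℤ | znorm k < A}.Finite := by
  refine ((isCompact_closedBall (0 : Fin n → ℤ) A).finite_of_discrete).subset ?_
  intro k hk
  rw [mem_closedBall_zero_iff]
  exact (norm_le_znorm k).trans (le_of_lt hk)

lemma summable_znorm_rpow {n : ℕ} (r : ℝ) (hr : r < -(n:ℝ)) :
    Summable fun k : Fin n → ℤ => znorm k ^ r := by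
  have h := summable_int_norm_rpow (Fin n) r (by simpa using hr)
  refine Summable.of_norm_bounded_eventually h ?_
  have : {k : Fin n → ℤ | ¬ (‖znorm k ^ r‖ ≤ ‖k‖ ^ r)} ⊆ {0} := by
    intro k hk
    by_contra h0
    apply hk
    have h1 := one_le_norm_int (k := k) h0
    rw [Real.norm_of_nonneg (Real.rpow_nonneg (znorm_nonneg k) r)]
    exact Real.rpow_le_rpow_of_nonpos (by linarith) (norm_le_znorm k)
      (by have : (0:ℝ) ≤ n := Nat.cast_nonneg n
          linarith)
  exact (Set.finite_singleton _).subset this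

lemma poly_bound {n d : ℕ} (P : MvPolynomial (Fin n) ℂ) (hP : P.IsHomogeneous d) :
    ∃ C : ℝ, 0 ≤ C ∧ ∀ (x : Fin n → ℂ) (A : ℝ), (∀ i, ‖x i‖ ≤ A) →
      ‖MvPolynomial.eval x P‖ ≤ C * A ^ d := by
  refine ⟨∑ m ∈ P.support, ‖P.coeff m‖, by positivity, fun x A hx => ?_⟩
  rw [MvPolynomial.eval_eq, Finset.sum_mul]
  refine (norm_sum_le _ _).trans (Finset.sum_le_sum fun m hm => ?_)
  rw [norm_mul, norm_prod]
  gcongr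
  have hd : ∑ i, m i = d := by
    have := hP (MvPolynomial.mem_support_iff.mp hm)
    rw [← this, Finsupp.weight_apply, Finsupp.sum_fintype _ _ (by simp)]
    simp
  rw [← hd, ← Finset.prod_pow_eq_pow_sum]
  have : ∏ i ∈ m.support, ‖x i ^ m i‖ = ∏ i, ‖x i ^ m i‖ := by
    apply Finset.prod_subset (Finset.subset_univ _)
    intro i _ hi
    simp [Finsupp.notMem_support_iff.mp hi]
  rw [this]
  refine Finset.prod_le_prod (fun _ _ => norm_nonneg _) fun i _ => ?_
  rw [norm_pow]
  exact pow_le_pow_left₀ (norm_nonneg _) (hx i) _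

lemma rpow_le_four {y t : ℝ} (h1 : 1 / 4 ≤ y) (h2 : y ≤ 4) : y ^ t ≤ 4 ^ |t| := by
  rcases le_or_gt 0 t with ht | ht
  · rw [abs_of_nonneg ht]
    exact Real.rpow_le_rpow (by linarith) h2 ht
  · rw [abs_of_neg ht]
    calc y ^ t ≤ (1 / 4 : ℝ) ^ t := Real.rpow_le_rpow_of_nonpos (by norm_num) h1 ht.le
      _ = 4 ^ (-t) := by
        rw [Real.rpow_neg (by norm_num), one_div, Real.inv_rpow (by norm_num)]

lemma cpow_bound {A S σ : ℝ} {x s : ℂ} (hA : 1 ≤ A) (hx : ‖x - ((A ^ 2 : ℝ) : ℂ)‖ ≤ 9 / 16 * A ^ 2)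
    (hs : ‖s‖ ≤ S) (hσ : σ ≤ s.re) :
    x ∈ Complex.slitPlane ∧
      ‖x ^ (-s / 2)‖ ≤ 4 ^ S * Real.exp (Real.pi * S) * A ^ (-σ) := by
  have hA2 : 0 < A ^ 2 := by positivity
  have hre : 0 < x.re := by
    have := (Complex.abs_re_le_norm _).trans hx
    rw [Complex.sub_re, Complex.ofReal_re] at this
    have := (abs_le.mp this).1
    linarith
  have hx0 : x ≠ 0 := by
    rintro rfl
    simp at hre
  refine ⟨Or.inl hre, ?_⟩
  rw [Complex.norm_cpow_of_ne_zero hx0]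
  have hre2 : (-s / 2).re = -s.re / 2 := by simp
  have him2 : (-s / 2).im = -s.im / 2 := by simp
  have hS0 : 0 ≤ S := (norm_nonneg s).trans hs
  have hsre : |s.re| ≤ S := (Complex.abs_re_le_norm s).trans hs
  have hsim : |s.im| ≤ S := (Complex.abs_im_le_norm s).trans hs
  have hn : ‖((A ^ 2 : ℝ) : ℂ)‖ = A ^ 2 := by
    rw [Complex.norm_real, Real.norm_of_nonneg hA2.le]
  have hup : ‖x‖ ≤ 4 * A ^ 2 := by
    have := norm_add_le (x - ((A ^ 2 : ℝ) : ℂ)) ((A ^ 2 : ℝ) : ℂ)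
    rw [sub_add_cancel, hn] at this
    linarith
  have hlow : A ^ 2 / 4 ≤ ‖x‖ := by
    have := norm_sub_norm_le ((A ^ 2 : ℝ) : ℂ) x
    rw [hn, norm_sub_rev] at this
    linarith
  have e1 : ‖x‖ ^ (-s / 2).re ≤ 4 ^ S * A ^ (-σ) := by
    rw [hre2]
    have hy : ‖x‖ = (‖x‖ / A ^ 2) * A ^ 2 := by field_simp
    rw [hy, Real.mul_rpow (by positivity) hA2.le]
    have h3 : (A ^ 2) ^ (-s.re / 2) = A ^ (-s.re) := by
      rw [← Real.rpow_natCast, ← Real.rpow_mul (by linarith)]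
      congr 1
      push_cast; ring
    rw [h3]
    refine mul_le_mul ?_ ?_ (by positivity) (by positivity)
    · refine (rpow_le_four (t := -s.re / 2) ?_ ?_).trans ?_
      · rw [le_div_iff₀ hA2]; linarith
      · rw [div_le_iff₀ hA2]; linarith
      · apply Real.rpow_le_rpow_of_exponent_le (by norm_num)
        rw [abs_div, abs_neg, abs_of_pos (by norm_num : (0:ℝ) < 2)]
        linarith
    · exact Real.rpow_le_rpow_of_exponent_le hA (by linarith)
  have e2 : (Real.exp (Complex.arg x * (-s / 2).im))⁻¹ ≤ Real.exp (Real.pi * S) := by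
    rw [← Real.exp_neg]
    apply Real.exp_le_exp.mpr
    rw [him2]
    have h4 : |x.arg * (-s.im / 2)| ≤ Real.pi * S := by
      rw [abs_mul]
      refine mul_le_mul (Complex.abs_arg_le_pi x) ?_ (abs_nonneg _) Real.pi_pos.le
      rw [abs_div, abs_neg, abs_of_pos (by norm_num : (0:ℝ) < 2)]
      linarith
    exact (neg_le_abs _).trans h4
  rw [div_eq_mul_inv]
  calc _ ≤ (4 ^ S * A ^ (-σ)) * Real.exp (Real.pi * S) :=
        mul_le_mul e1 e2 (by positivity) (by positivity)
    _ = _ := by ring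

/-- The untwisted term. -/
def baseTerm {n : ℕ} (P : MvPolynomial (Fin n) ℂ) (s : ℂ) (k : Fin n → ℤ) : ℂ :=
  if k = 0 then 0 else MvPolynomial.eval (fun i => ((k i : ℤ) : ℂ)) P / ((znorm k : ℂ) ^ s)

/-- Iterated differences of the untwisted term. -/
def diffTerm {n : ℕ} (P : MvPolynomial (Fin n) ℂ) (u : Fin n → ℤ) (N : ℕ) (s : ℂ)
    (k : Fin n → ℤ) : ℂ := (fwdDiff u)^[N] (baseTerm P s) k

lemma diffTerm_succ {n : ℕ} (P : MvPolynomial (Fin n) ℂ) (u : Fin n → ℤ) (N : ℕ) (s : ℂ)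
    (k : Fin n → ℤ) :
    diffTerm P u (N + 1) s k = diffTerm P u N s (k + u) - diffTerm P u N s k := by
  unfold diffTerm
  rw [Function.iterate_succ_apply']
  rfl

lemma differentiable_diffTerm {n : ℕ} (P : MvPolynomial (Fin n) ℂ) (u : Fin n → ℤ) (N : ℕ) :
    ∀ k, Differentiable ℂ (fun s => diffTerm P u N s k) := by
  induction N with
  | zero =>
    intro k
    by_cases hk : k = 0
    · simp [diffTerm, baseTerm, hk]
    · have h0 : (znorm k : ℂ) ≠ 0 := by
        have := one_le_znorm hk
        exact_mod_cast (by linarith : (0:ℝ) < znorm k).ne'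
      simp only [diffTerm, baseTerm, hk, if_false, Function.iterate_zero, id]
      intro s
      refine (differentiableAt_const _).div ?_ ?_
      · exact differentiableAt_id.const_cpow (Or.inl h0)
      · simp [Complex.cpow_eq_zero_iff, h0]
  | succ N ih =>
    intro k
    simp only [diffTerm_succ]
    exact (ih _).sub (ih _)

/-- The complexified term along the direction `u`. -/
def lineFun {n : ℕ} (P : MvPolynomial (Fin n) ℂ) (u k : Fin n → ℤ) (s z : ℂ) : ℂ :=
  MvPolynomial.eval (fun i => ((k i : ℤ) : ℂ) + z * ((u i : ℤ) : ℂ)) P *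
    (∑ i, (((k i : ℤ) : ℂ) + z * ((u i : ℤ) : ℂ)) ^ 2) ^ (-s / 2)

lemma lineFun_nat {n : ℕ} (P : MvPolynomial (Fin n) ℂ) (u k : Fin n → ℤ) (s : ℂ) (j : ℕ)
    (h : (∑ i, (((k i : ℤ) : ℂ) + (j:ℂ) * ((u i : ℤ) : ℂ)) ^ 2) ≠ 0) :
    baseTerm P s (k + j • u) = lineFun P u k s j := by
  have hk : k + j • u ≠ 0 := by
    intro h0
    apply h
    apply Finset.sum_eq_zero
    intro i _
    have : k i + j * u i = 0 := by simpa using congrFun h0 i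
    have h1 : ((k i : ℤ) : ℂ) + (j:ℂ) * ((u i : ℤ) : ℂ) = ((k i + j * u i : ℤ) : ℂ) := by
      push_cast; ring
    rw [h1, this]; simp
  unfold baseTerm lineFun
  rw [if_neg hk, div_eq_mul_inv]
  congr 1
  · congr 2
    funext i
    simp
  · have hz := one_le_znorm hk
    have hpos : 0 < znorm (k + j • u) := by linarith
    have h2 : (∑ i, (((k i : ℤ) : ℂ) + (j:ℂ) * ((u i : ℤ) : ℂ)) ^ 2)
        = ((znorm (k + j • u) ^ 2 : ℝ) : ℂ) := by
      rw [znorm_sq]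
      push_cast
      simp
    rw [h2, ← Complex.cpow_neg, Complex.cpow_def_of_ne_zero (by exact_mod_cast hpos.ne'),
      Complex.cpow_def_of_ne_zero (by exact_mod_cast (pow_pos hpos 2).ne'),
      ← Complex.ofReal_log hpos.le, ← Complex.ofReal_log (by positivity), Real.log_pow]
    congr 1
    push_cast; ring

lemma quad_bound {n : ℕ} (u k : Fin n → ℤ) (z : ℂ) (h : ‖z‖ * znorm u ≤ znorm k / 4) :
    ‖(∑ i, (((k i : ℤ) : ℂ) + z * ((u i : ℤ) : ℂ)) ^ 2) - ((znorm k ^ 2 : ℝ) : ℂ)‖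
      ≤ 9 / 16 * znorm k ^ 2 := by
  have h1 : (∑ i, (((k i : ℤ) : ℂ) + z * ((u i : ℤ) : ℂ)) ^ 2) - ((znorm k ^ 2 : ℝ) : ℂ)
      = 2 * z * ((∑ i, (k i : ℝ) * (u i : ℝ) : ℝ) : ℂ) + z ^ 2 * ((znorm u ^ 2 : ℝ) : ℂ) := by
    rw [znorm_sq, znorm_sq]
    push_cast
    rw [Finset.mul_sum, Finset.mul_sum, ← Finset.sum_add_distrib, ← Finset.sum_sub_distrib]
    apply Finset.sum_congr rfl
    intro i _
    ring
  rw [h1]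
  refine (norm_add_le _ _).trans ?_
  rw [norm_mul, norm_mul, norm_mul, Complex.norm_real, Complex.norm_real, norm_pow,
    Real.norm_eq_abs, Real.norm_eq_abs, abs_of_nonneg (sq_nonneg (znorm u)), Complex.norm_two]
  have h2 := abs_inner_le k u
  have hk := znorm_nonneg k
  have hu := znorm_nonneg u
  have hz := norm_nonneg z
  have h3 : ‖z‖ * |∑ i, (k i : ℝ) * (u i : ℝ)| ≤ znorm k / 4 * znorm k := by
    calc _ ≤ ‖z‖ * (znorm k * znorm u) := by gcongr
      _ = (‖z‖ * znorm u) * znorm k := by ring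
      _ ≤ _ := by gcongr
  have h4 : ‖z‖ ^ 2 * znorm u ^ 2 ≤ (znorm k / 4) ^ 2 := by
    rw [← mul_pow]
    gcongr
  nlinarith

lemma diffTerm_bound {n d : ℕ} (P : MvPolynomial (Fin n) ℂ) (hP : P.IsHomogeneous d)
    (u : Fin n → ℤ) (N : ℕ) (S σ : ℝ) :
    ∃ A₀ K : ℝ, ∀ s : ℂ, ‖s‖ ≤ S → σ ≤ s.re → ∀ k, A₀ ≤ znorm k →
      ‖diffTerm P u N s k‖ ≤ K * znorm k ^ ((d:ℝ) - σ - N) := by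
  obtain ⟨C, hC0, hC⟩ := poly_bound P hP
  have hU := znorm_nonneg u
  obtain ⟨c, hcdef⟩ : ∃ c : ℝ, c = 1 / (4 * (znorm u + 1)) := ⟨_, rfl⟩
  have hc : 0 < c := by rw [hcdef]; positivity
  have hcU : c * znorm u ≤ 1 / 4 := by
    rw [hcdef, div_mul_eq_mul_div, div_le_div_iff₀ (by positivity) (by norm_num)]
    linarith
  obtain ⟨c', hc'def⟩ : ∃ c' : ℝ, c' = c / (2 * (N + 1)) := ⟨_, rfl⟩
  have hc' : 0 < c' := by rw [hc'def]; positivity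
  have hNc' : N * c' ≤ c / 2 := by
    rw [hc'def, mul_div_assoc', div_le_div_iff₀ (by positivity) (by norm_num)]
    nlinarith
  refine ⟨2 * N / c + 1, C * 2 ^ d * (4 ^ S * Real.exp (Real.pi * S)) / c' ^ N, ?_⟩
  intro s hs hσ k hk
  have hNc : 0 ≤ 2 * N / c := by positivity
  have hA : 1 ≤ znorm k := by linarith
  have hA0 : 0 < znorm k := by linarith
  have hNA : (N:ℝ) < c * znorm k / 2 := by
    have : 2 * N / c < znorm k := by linarith
    rw [div_lt_iff₀ hc] at this
    linarith
  have hzU : ∀ z ∈ Metric.ball (0:ℂ) (c * znorm k), ‖z‖ * znorm u ≤ znorm k / 4 := by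
    intro z hz
    rw [mem_ball_zero_iff] at hz
    calc ‖z‖ * znorm u ≤ c * znorm k * znorm u := by gcongr
      _ = (c * znorm u) * znorm k := by ring
      _ ≤ 1 / 4 * znorm k := by gcongr
      _ = _ := by ring
  have hcp := fun z hz => cpow_bound hA (quad_bound u k z (hzU z hz)) hs hσ
  have hsmall : (N:ℝ) * (1 + c' * znorm k) < c * znorm k := by nlinarith
  have heq : diffTerm P u N s k = (fwdDiff (1:ℂ))^[N] (lineFun P u k s) 0 := by
    unfold diffTerm
    rw [fwdDiff_iter_eq_sum_shift, fwdDiff_iter_eq_sum_shift]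
    apply Finset.sum_congr rfl
    intro j hj
    have hjN : (j:ℝ) ≤ N := by exact_mod_cast Finset.mem_range_succ_iff.mp hj
    have hjb : (j:ℂ) ∈ Metric.ball (0:ℂ) (c * znorm k) := by
      rw [mem_ball_zero_iff, Complex.norm_natCast]
      nlinarith
    rw [lineFun_nat P u k s j (Complex.slitPlane_ne_zero (hcp _ hjb).1)]
    simp
  rw [heq]
  have hb := fwdDiff_iter_bound (c' * znorm k) (by positivity) N (lineFun P u k s)
    (c * znorm k) (C * (2 * znorm k) ^ d * (4 ^ S * Real.exp (Real.pi * S) * znorm k ^ (-σ)))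
    ?_ ?_ 0 ?_
  · refine hb.trans (le_of_eq ?_)
    rw [Real.rpow_sub hA0, sub_eq_add_neg, Real.rpow_add hA0, Real.rpow_natCast, Real.rpow_natCast,
      mul_pow, mul_pow]
    field_simp
  · intro z hz
    apply DifferentiableAt.differentiableWithinAt
    unfold lineFun
    refine DifferentiableAt.mul ?_ ?_
    · simp only [MvPolynomial.eval_eq]
      fun_prop
    · exact DifferentiableAt.cpow (by fun_prop) (by fun_prop) (hcp z hz).1
  · intro z hz
    unfold lineFun
    rw [norm_mul]
    refine mul_le_mul (hC _ _ fun i => ?_) (hcp z hz).2 (norm_nonneg _) (by positivity)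
    refine (norm_add_le _ _).trans ?_
    rw [norm_mul]
    have h1 : ‖((k i : ℤ) : ℂ)‖ ≤ znorm k := by
      rw [Complex.norm_intCast]; exact abs_le_znorm k i
    have h2 : ‖z‖ * ‖((u i : ℤ) : ℂ)‖ ≤ ‖z‖ * znorm u := by
      rw [Complex.norm_intCast]
      gcongr
      exact abs_le_znorm u i
    have := hzU z hz
    linarith
  · rw [mem_ball_zero_iff, norm_zero]
    linarith

lemma diffTerm_local_bound {n d : ℕ} (P : MvPolynomial (Fin n) ℂ) (hP : P.IsHomogeneous d)
    (u : Fin n → ℤ) (N : ℕ) (s₀ : ℂ) (hs₀ : (d:ℝ) + n - N < s₀.re) :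
    ∃ r : ℝ, 0 < r ∧ ∃ v : (Fin n → ℤ) → ℝ, Summable v ∧
      ∀ s ∈ Metric.ball s₀ r, ∀ k, ‖diffTerm P u N s k‖ ≤ v k := by
  obtain ⟨r, hr⟩ : ∃ r : ℝ, r = (s₀.re - (d + n - N)) / 2 := ⟨_, rfl⟩
  have hr0 : 0 < r := by rw [hr]; linarith
  obtain ⟨A₀, K, hK⟩ := diffTerm_bound P hP u N (‖s₀‖ + r) (s₀.re - r)
  have hB : ∀ k, ∃ B : ℝ, ∀ s ∈ Metric.closedBall s₀ r, ‖diffTerm P u N s k‖ ≤ B := fun k =>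
    (isCompact_closedBall s₀ r).exists_bound_of_continuousOn
      (differentiable_diffTerm P u N k).continuous.continuousOn
  choose B hB using hB
  classical
  refine ⟨r, hr0, fun k => if znorm k < A₀ then B k else
    K * znorm k ^ ((d:ℝ) - (s₀.re - r) - N), ?_, ?_⟩
  · have hsum := (summable_znorm_rpow (n := n) ((d:ℝ) - (s₀.re - r) - N) (by linarith)).mul_left K
    refine hsum.congr_cofinite ?_
    refine (finite_znorm_lt A₀).subset ?_
    intro k hk
    by_contra h
    apply hk
    simp only [Set.mem_ofPred_eq] at h
    simp [h]
  · intro s hs k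
    dsimp only
    split_ifs with h
    · exact hB k s (Metric.ball_subset_closedBall hs)
    · rw [Metric.mem_ball, dist_eq_norm] at hs
      refine hK s ?_ ?_ k (not_lt.mp h)
      · have := norm_add_le (s - s₀) s₀
        rw [sub_add_cancel] at this
        linarith
      · have := (Complex.abs_re_le_norm (s - s₀)).trans hs.le
        rw [Complex.sub_re] at this
        linarith [(abs_le.mp this).1]

/-- The character `k ↦ e^{2πi k·a}`. -/
def eChar {n : ℕ} (a : Fin n → ℝ) (k : Fin n → ℤ) : ℂ :=
  Complex.exp (2 * (Real.pi : ℂ) * Complex.I * ((∑ i, (k i : ℝ) * a i : ℝ) : ℂ))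

lemma eChar_add {n : ℕ} (a : Fin n → ℝ) (k u : Fin n → ℤ) :
    eChar a (k + u) = eChar a k * eChar a u := by
  unfold eChar
  rw [← Complex.exp_add]
  congr 1
  simp only [Pi.add_apply, Int.cast_add, add_mul, Finset.sum_add_distrib]
  push_cast; ring

lemma norm_eChar {n : ℕ} (a : Fin n → ℝ) (k : Fin n → ℤ) : ‖eChar a k‖ = 1 := by
  unfold eChar
  rw [show 2 * (Real.pi : ℂ) * Complex.I * ((∑ i, (k i : ℝ) * a i : ℝ) : ℂ)
    = ((2 * Real.pi * ∑ i, (k i : ℝ) * a i : ℝ) : ℂ) * Complex.I by push_cast; ring]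
  exact Complex.norm_exp_ofReal_mul_I _

lemma eChar_sub_one_lower {n : ℕ} (a : Fin n → ℝ) (u : Fin n → ℤ) (z : ℝ) {c : ℝ}
    (h : ∀ m : ℤ, c * z ≤ |(∑ i, (u i : ℝ) * a i) - (m : ℝ)|) :
    4 * c * z ≤ ‖eChar a (-u) - 1‖ := by
  obtain ⟨θ, hθ⟩ : ∃ θ : ℝ, θ = ∑ i, (u i : ℝ) * a i := ⟨_, rfl⟩
  have h1 := h (round θ)
  rw [← hθ] at h1
  have h2 : |θ - round θ| ≤ 1 / 2 := abs_sub_round θ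
  have h3 : eChar a (-u) = Complex.exp (Complex.I * ((-(2 * Real.pi * (θ - round θ)) : ℝ) : ℂ)) := by
    unfold eChar
    rw [Complex.exp_eq_exp_iff_exists_int]
    refine ⟨-round θ, ?_⟩
    have : ∑ i, (((-u) i : ℤ) : ℝ) * a i = -θ := by
      rw [hθ]; simp
    rw [this]
    push_cast; ring
  rw [h3, Complex.norm_exp_I_mul_ofReal_sub_one]
  have h4 : |-(2 * Real.pi * (θ - round θ)) / 2| = Real.pi * |θ - round θ| := by
    rw [show -(2 * Real.pi * (θ - round θ)) / 2 = -(Real.pi * (θ - round θ)) by ring, abs_neg,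
      abs_mul, abs_of_pos Real.pi_pos]
  have h5 := Real.mul_abs_le_abs_sin (x := -(2 * Real.pi * (θ - round θ)) / 2) (by
    rw [h4]; nlinarith [Real.pi_pos])
  rw [h4] at h5
  have h6 : 2 / Real.pi * (Real.pi * |θ - round θ|) = 2 * |θ - round θ| := by
    field_simp
  rw [norm_mul, Real.norm_eq_abs, Real.norm_eq_abs, abs_of_pos (by norm_num : (0:ℝ) < 2)]
  linarith

/-- The vector `Θ Σ εᵢ lᵢ`. -/
def avec {n q : ℕ} (Θ : Matrix (Fin n) (Fin n) ℝ) (ε : Fin q → ℤ) (l : Fin q → Fin n → ℤ) :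
    Fin n → ℝ := Θ.mulVec fun j => (((∑ i, ε i • l i) j : ℤ) : ℝ)

/-- Twisted sum of the iterated differences. -/
def phi {n : ℕ} (P : MvPolynomial (Fin n) ℂ) (u : Fin n → ℤ) (N : ℕ) (a : Fin n → ℝ) (s : ℂ) : ℂ :=
  ∑' k, diffTerm P u N s k * eChar a k

lemma phi_succ {n d : ℕ} (P : MvPolynomial (Fin n) ℂ) (hP : P.IsHomogeneous d) (u : Fin n → ℤ)
    (N : ℕ) (a : Fin n → ℝ) (s : ℂ) (hs : (d:ℝ) + n - N < s.re) :
    phi P u (N + 1) a s = (eChar a (-u) - 1) * phi P u N a s := by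
  obtain ⟨r, hr, v, hv, hbd⟩ := diffTerm_local_bound P hP u N s hs
  have hsum : Summable fun k => diffTerm P u N s k * eChar a k := by
    refine Summable.of_norm_bounded hv fun k => ?_
    rw [norm_mul, norm_eChar, mul_one]
    exact hbd s (Metric.mem_ball_self hr) k
  have hshift : (fun k => diffTerm P u N s (k + u) * eChar a k)
      = (fun k => eChar a (-u) * (diffTerm P u N s k * eChar a k)) ∘ (Equiv.addRight u) := by
    funext k
    simp only [Function.comp, Equiv.coe_addRight]
    have : eChar a k = eChar a (k + u) * eChar a (-u) := by
      rw [← eChar_add, add_neg_cancel_right]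
    rw [this]; ring
  have hsum2 := hsum.mul_left (eChar a (-u))
  have hsum3 : Summable fun k => diffTerm P u N s (k + u) * eChar a k := by
    rw [hshift]
    exact (Equiv.summable_iff _).mpr hsum2
  unfold phi
  simp only [diffTerm_succ, sub_mul]
  rw [hsum3.tsum_sub hsum, hshift, one_mul, ← tsum_mul_left]
  congr 1
  exact Equiv.tsum_eq (Equiv.addRight u) (fun k => eChar a (-u) * (diffTerm P u N s k * eChar a k))

lemma phi_local {n : ℕ} (P : MvPolynomial (Fin n) ℂ) (u : Fin n → ℤ)
    (N : ℕ) (a : Fin n → ℝ) (s₀ : ℂ) (r : ℝ) (v : (Fin n → ℤ) → ℝ) (hv : Summable v)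
    (hbd : ∀ s ∈ Metric.ball s₀ r, ∀ k, ‖diffTerm P u N s k‖ ≤ v k) :
    DifferentiableOn ℂ (phi P u N a) (Metric.ball s₀ r) ∧
      ∀ s ∈ Metric.ball s₀ r, ‖phi P u N a s‖ ≤ ∑' k, v k := by
  have hle : ∀ k, ∀ s ∈ Metric.ball s₀ r, ‖diffTerm P u N s k * eChar a k‖ ≤ v k := by
    intro k s hs
    rw [norm_mul, norm_eChar, mul_one]
    exact hbd s hs k
  constructor
  · exact Complex.differentiableOn_tsum_of_summable_norm hv
      (fun k => ((differentiable_diffTerm P u N k).mul_const _).differentiableOn)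
      Metric.isOpen_ball hle
  · intro s hs
    exact tsum_of_norm_bounded hv.hasSum fun k => hle k s hs

lemma znorm_comb_sq_le {n q : ℕ} (ε : Fin q → ℤ) (hε : ∀ i, ε i = -1 ∨ ε i = 0 ∨ ε i = 1)
    (l : Fin q → Fin n → ℤ) :
    znorm (∑ i, ε i • l i) ^ 2 ≤ q * ∑ i, ∑ a, ((l i a : ℝ)) ^ 2 := by
  rw [znorm_sq, Finset.sum_comm, Finset.mul_sum]
  refine Finset.sum_le_sum fun a _ => ?_
  have h1 : (((∑ i, ε i • l i) a : ℤ) : ℝ) = ∑ i, (ε i : ℝ) * (l i a : ℝ) := by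
    rw [Finset.sum_apply]; push_cast; simp
  rw [h1]
  have h2 := sq_sum_le_card_mul_sum_sq (s := Finset.univ) (f := fun i => (ε i : ℝ) * (l i a : ℝ))
  refine h2.trans ?_
  simp only [Finset.card_univ, Fintype.card_fin]
  refine mul_le_mul_of_nonneg_left (Finset.sum_le_sum fun i _ => ?_) (Nat.cast_nonneg q)
  rcases hε i with h | h | h <;> simp [h, sq_nonneg]

lemma schwartz_summable {n q : ℕ} (b : (Fin q → Fin n → ℤ) → ℂ) (hb : IsSchwartzSeq b)
    (ε : Fin q → ℤ) (hε : ∀ i, ε i = -1 ∨ ε i = 0 ∨ ε i = 1) (hq : 0 < q) (δ : ℝ) (hδ : 0 < δ)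
    (N : ℕ) : Summable fun l => ‖b l‖ * (znorm (∑ i, ε i • l i) ^ δ) ^ N := by
  obtain ⟨M, hM⟩ : ∃ M : ℕ, δ ≤ M := exists_nat_ge δ
  obtain ⟨D, hD⟩ : ∃ D : ℕ, D = q * n + 1 := ⟨_, rfl⟩
  obtain ⟨C, hC⟩ := hb (2 * (M * N + D))
  have hq1 : (1:ℝ) ≤ q := by exact_mod_cast hq
  have key : ∀ l : Fin q → Fin n → ℤ, ‖b l‖ * (znorm (∑ i, ε i • l i) ^ δ) ^ N ≤
      Real.sqrt C * (q:ℝ) ^ (M * N) * ((1 + ∑ i, ∑ a, ((l i a : ℝ)) ^ 2) ^ D)⁻¹ := by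
    intro l
    obtain ⟨W, hW⟩ : ∃ W : ℝ, W = 1 + ∑ i, ∑ a, ((l i a : ℝ)) ^ 2 := ⟨_, rfl⟩
    have hW1 : 1 ≤ W := by
      rw [hW]
      have : 0 ≤ ∑ i, ∑ a, ((l i a : ℝ)) ^ 2 := by positivity
      linarith
    have hCl := hC l
    have hzz := znorm_comb_sq_le ε hε l
    rw [← hW] at hCl ⊢
    have hz0 := znorm_nonneg (∑ i, ε i • l i)
    have hY1 : 1 ≤ q * W := by nlinarith
    have hz : znorm (∑ i, ε i • l i) ≤ q * W := by
      have : znorm (∑ i, ε i • l i) ^ 2 ≤ (q * W) ^ 2 := by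
        have : (q:ℝ) * ∑ i, ∑ a, ((l i a : ℝ)) ^ 2 = q * W - q := by rw [hW]; ring
        nlinarith
      exact le_of_sq_le_sq this (by linarith)
    have h1 : (znorm (∑ i, ε i • l i) ^ δ) ^ N ≤ (q * W) ^ (M * N) := by
      rw [pow_mul]
      refine pow_le_pow_left₀ (Real.rpow_nonneg hz0 δ) ?_ N
      calc _ ≤ (q * W) ^ δ := Real.rpow_le_rpow hz0 hz hδ.le
        _ ≤ (q * W) ^ (M:ℝ) := Real.rpow_le_rpow_of_exponent_le hY1 hM
        _ = _ := Real.rpow_natCast _ _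
    have h2 : W ^ (M * N + D) * ‖b l‖ ≤ Real.sqrt C := by
      apply Real.le_sqrt_of_sq_le
      rw [mul_pow, ← pow_mul, mul_comm (M * N + D) 2]
      exact hCl
    calc _ ≤ ‖b l‖ * (q * W) ^ (M * N) := by gcongr
      _ = (W ^ (M * N + D) * ‖b l‖) * (q:ℝ) ^ (M * N) * (W ^ D)⁻¹ := by
        rw [pow_add, mul_pow]
        field_simp
      _ ≤ _ := by gcongr
  have hsum : Summable fun l : Fin q → Fin n → ℤ =>
      ((1 + ∑ i, ∑ a, ((l i a : ℝ)) ^ 2) ^ D)⁻¹ := by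
    rw [← (Equiv.curry (Fin q) (Fin n) ℤ).summable_iff]
    have h := summable_int_norm_rpow (Fin q × Fin n) (-(D:ℝ)) (by
      rw [hD]; simp)
    refine Summable.of_norm_bounded_eventually h ?_
    refine (Set.finite_singleton (0 : Fin q × Fin n → ℤ)).subset ?_
    intro x hx
    by_contra h0
    apply hx
    have h1 := one_le_norm_int (k := x) h0
    simp only [Function.comp, Equiv.curry_apply, Function.curry_apply]
    have hW : ‖x‖ ≤ 1 + ∑ i, ∑ a, ((x (i, a) : ℝ)) ^ 2 := by
      have hpos : 0 ≤ ∑ i, ∑ a, ((x (i, a) : ℝ)) ^ 2 := by positivity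
      rw [pi_norm_le_iff_of_nonneg (by linarith)]
      rintro ⟨i, a⟩
      rw [Int.norm_eq_abs]
      have h2 : ((x (i, a) : ℝ)) ^ 2 ≤ ∑ i, ∑ a, ((x (i, a) : ℝ)) ^ 2 := by
        refine le_trans ?_ (Finset.single_le_sum (f := fun i => ∑ a, ((x (i, a) : ℝ)) ^ 2)
          (fun _ _ => by positivity) (Finset.mem_univ i))
        exact Finset.single_le_sum (f := fun a => ((x (i, a) : ℝ)) ^ 2)
          (fun _ _ => by positivity) (Finset.mem_univ a)
      have h3 := sq_abs (x (i, a) : ℝ)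
      nlinarith [sq_nonneg (|(x (i, a) : ℝ)| - 1)]
    change ‖((1 + ∑ i, ∑ a, ((x (i, a) : ℝ)) ^ 2) ^ D)⁻¹‖ ≤ ‖x‖ ^ (-(D:ℝ))
    rw [Real.norm_of_nonneg (by positivity), Real.rpow_neg (by linarith), Real.rpow_natCast]
    gcongr
  refine Summable.of_nonneg_of_le (fun l => ?_) key (hsum.mul_left _)
  have := Real.rpow_nonneg (znorm_nonneg (∑ i, ε i • l i)) δ
  positivity

/-- **Theorem.** Let `P` be homogeneous of degree `d`, `b ∈ 𝒮((ℤⁿ)^q)`,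
`ε ∈ {−1,0,1}^q` and `Θ ∈ Mₙ(ℝ)` diophantine.  With
`𝒵 = {l : Σᵢ εᵢ lᵢ = 0}`, the function
`g₀(s) = Σ_{l∉𝒵} b(l) f_{Θ Σᵢ εᵢ lᵢ}(s)` extends holomorphically to all of `ℂ`. -/
theorem series_fa_offdiag_entire (n q : ℕ) (hn : 0 < n) (hq : 0 < q) (d : ℕ)
    (P : MvPolynomial (Fin n) ℂ) (hP : P.IsHomogeneous d)
    (b : (Fin q → Fin n → ℤ) → ℂ) (hb : IsSchwartzSeq b)
    (ε : Fin q → ℤ) (hε : ∀ i, ε i = -1 ∨ ε i = 0 ∨ ε i = 1)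
    (Θ : Matrix (Fin n) (Fin n) ℝ) (hΘ : IsDiophantineMatrix Θ) :
    ∃ g : ℂ → ℂ, Differentiable ℂ g ∧
      ∀ s : ℂ, (d : ℝ) + (n : ℝ) < s.re →
        g s = ∑' l : {l : Fin q → Fin n → ℤ // ∑ i, ε i • l i ≠ 0},
          b l.val * ∑' k : Fin n → ℤ,
            fTerm P (Θ.mulVec fun j => (((∑ i, ε i • l.val i) j : ℤ) : ℝ)) s k := by
  obtain ⟨u, δ, hδ, c, hc, hdio⟩ := hΘ
  have hEl : ∀ l : {l : Fin q → Fin n → ℤ // ∑ i, ε i • l i ≠ 0},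
      4 * c * znorm (∑ i, ε i • l.val i) ^ (-δ) ≤ ‖eChar (avec Θ ε l.val) (-u) - 1‖ := by
    intro l
    refine eChar_sub_one_lower _ u _ fun m => ?_
    have h := hdio _ l.2 m
    rw [mul_comm]
    have hcomm : ∑ i, (u i : ℝ) * avec Θ ε l.val i = ∑ i, (((∑ i, ε i • l.val i) i : ℤ) : ℝ) *
        (Θ.transpose.mulVec fun i => (u i : ℝ)) i := by
      have h1 := Matrix.dotProduct_mulVec (fun i => (u i : ℝ)) Θ
        (fun j => (((∑ i, ε i • l.val i) j : ℤ) : ℝ))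
      rw [← Matrix.mulVec_transpose, dotProduct_comm (Matrix.mulVec _ _)] at h1
      exact h1
    rw [hcomm, mul_comm]
    exact h
  have hzpos : ∀ l : {l : Fin q → Fin n → ℤ // ∑ i, ε i • l i ≠ 0},
      0 < znorm (∑ i, ε i • l.val i) := fun l => by linarith [one_le_znorm l.2]
  have hE0 : ∀ l : {l : Fin q → Fin n → ℤ // ∑ i, ε i • l i ≠ 0},
      eChar (avec Θ ε l.val) (-u) - 1 ≠ 0 := by
    intro l h0
    have := hEl l
    rw [h0, norm_zero] at this
    have h2 := Real.rpow_pos_of_pos (hzpos l) (-δ)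
    nlinarith [mul_pos hc h2]
  have hEinv : ∀ l : {l : Fin q → Fin n → ℤ // ∑ i, ε i • l i ≠ 0},
      ‖(eChar (avec Θ ε l.val) (-u) - 1)⁻¹‖ ≤ (4 * c)⁻¹ * znorm (∑ i, ε i • l.val i) ^ δ := by
    intro l
    rw [norm_inv]
    have h2 := Real.rpow_pos_of_pos (hzpos l) (-δ)
    refine (inv_anti₀ (by positivity) (hEl l)).trans (le_of_eq ?_)
    rw [mul_inv, Real.rpow_neg (hzpos l).le, inv_inv]
  let H : ℕ → ℂ → ℂ := fun N s => ∑' l : {l : Fin q → Fin n → ℤ // ∑ i, ε i • l i ≠ 0},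
    b l.val * ((eChar (avec Θ ε l.val) (-u) - 1)⁻¹) ^ N * phi P u N (avec Θ ε l.val) s
  have hstep : ∀ (N : ℕ) (s : ℂ), (d:ℝ) + n - N < s.re → H (N + 1) s = H N s := by
    intro N s hs
    refine tsum_congr fun l => ?_
    rw [phi_succ P hP u N _ s hs, pow_succ]
    have := hE0 l
    field_simp
  have hmono : ∀ (N M : ℕ) (s : ℂ), N ≤ M → (d:ℝ) + n - N < s.re → H M s = H N s := by
    intro N M s hNM hs
    induction M, hNM using Nat.le_induction with
    | base => rfl
    | succ M hM ih =>
      rw [hstep M s, ih]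
      have : (N:ℝ) ≤ M := by exact_mod_cast hM
      linarith
  have hdiff : ∀ (N : ℕ) (s : ℂ), (d:ℝ) + n - N < s.re → DifferentiableAt ℂ (H N) s := by
    intro N s₀ hs₀
    obtain ⟨r, hr, v, hv, hbd⟩ := diffTerm_local_bound P hP u N s₀ hs₀
    have hsumb := schwartz_summable b hb ε hε hq δ hδ N
    have hsumb2 := ((hsumb.subtype {l | ∑ i, ε i • l i ≠ 0}).mul_right
      (((4 * c)⁻¹) ^ N)).mul_right (∑' k, v k)
    refine (Complex.differentiableOn_tsum_of_summable_norm hsumb2 ?_ Metric.isOpen_ball ?_).differentiableAt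
      (Metric.ball_mem_nhds s₀ hr)
    · intro l
      exact (phi_local P u N _ s₀ r v hv hbd).1.const_mul _
    · intro l s hs
      have h1 := (phi_local P u N (avec Θ ε l.val) s₀ r v hv hbd).2 s hs
      have h0 : 0 ≤ ∑' k, v k := (norm_nonneg _).trans h1
      rw [norm_mul, norm_mul, norm_pow]
      refine mul_le_mul ?_ h1 (norm_nonneg _) ?_
      · have h3 := pow_le_pow_left₀ (norm_nonneg _) (hEinv l) N
        calc _ ≤ ‖b l.val‖ * ((4 * c)⁻¹ * znorm (∑ i, ε i • l.val i) ^ δ) ^ N := by gcongr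
          _ = _ := by
            simp only [Function.comp]
            rw [mul_pow]; ring
      · simp only [Function.comp]
        have := Real.rpow_nonneg (znorm_nonneg (∑ i, ε i • l.val i)) δ
        positivity
  let Nf : ℂ → ℕ := fun s => ⌈(d:ℝ) + n - s.re⌉₊ + 1
  have hNf : ∀ s, (d:ℝ) + n - Nf s < s.re := by
    intro s
    have := Nat.le_ceil ((d:ℝ) + n - s.re)
    simp only [Nf]
    push_cast
    linarith
  refine ⟨fun s => H (Nf s) s, ?_, ?_⟩
  · intro s₀
    have hev : (fun s => H (Nf s) s) =ᶠ[𝓝 s₀] H (Nf s₀) := by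
      have hopen : IsOpen {s : ℂ | (d:ℝ) + n - Nf s₀ < s.re} :=
        isOpen_lt continuous_const Complex.continuous_re
      filter_upwards [hopen.mem_nhds (hNf s₀)] with s hs
      rcases le_total (Nf s) (Nf s₀) with h | h
      · exact (hmono _ _ s h (hNf s)).symm
      · exact hmono _ _ s h hs
    exact (hdiff _ s₀ (hNf s₀)).congr_of_eventuallyEq hev
  · intro s hs
    change H (Nf s) s = _
    rw [hmono 0 (Nf s) s (Nat.zero_le _) (by simpa using hs)]
    refine tsum_congr fun l => ?_
    rw [pow_zero, mul_one]
    congr 1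
    refine tsum_congr fun k => ?_
    simp only [fTerm, diffTerm, baseTerm, eChar, avec, Function.iterate_zero, id]
    split_ifs <;> simp

end
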